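/- Let α, β ∈ K with αβ ≠ 0 and α^q ≠ β^{q+1}, and suppose L_{α,β} is maximum scattered. Then α^q/β^{q+1} ∈ F, i.e. (α^q/β^{q+1})^q = α^q/β^{q+1}. -/

import Mathlib

/-- The `F`-linear map `T_{α,β} : K → K²`, `x ↦ (x − α x^{q²}, x^q − β x^{q²})`. -/
def Tmap (q : ℕ) {K : Type*} [Field K] (α β : K) (x : K) : K × K :=
  (x - α * x ^ q ^ 2, x ^ q - β * x ^ q ^ 2)

/-- The linear set `L_{α,β}` is maximum scattered: `T_{α,β}` is injective and
`K`-linear dependence of `T_{α,β}(x)` and `T_{α,β}(y)` for nonzero `x, y` forces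
`y/x ∈ F`. -/
def IsMaxScattered (q : ℕ) {K : Type*} [Field K] (F : Subfield K) (α β : K) : Prop :=
  Function.Injective (Tmap q α β) ∧
    ∀ x y : K, x ≠ 0 → y ≠ 0 →
      ¬ LinearIndependent K ![Tmap q α β x, Tmap q α β y] → y / x ∈ F

/-!
Write `σ` for the Frobenius `x ↦ x ^ q` and put `γ = α ^ q / β ^ (q + 1)`. Call `a` in `K` a frieze
if its conjugates satisfy `aᵢ aᵢ₊₁ = 1 + aᵢ₊₃`. Then `σ² + aσ + 1` is a left factor of
`σ⁵ - 1 = 0`, and the image of the cofactor contains `x`, `y` that are independent over `F`. If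
moreover `α u + aβ σ(u) + σ²(u) = 0` for some `u ≠ 0`, then `T(x / u)` and `T(y / u)` are
proportional, so `L` is not scattered. Such a `u` exists as soon as the Dickson determinant of
`α + aβσ + σ²` vanishes. Modulo the frieze relations this determinant is affine in the conjugates
of `a`: the condition reads `∑ cᵢ aᵢ = e` with `cᵢ = (1 - γᵢ₊₁)(1 - γᵢ₊₃)` and `e` in `F`. When `γ`
is not in `F`, the `cᵢ` are distinct.

Friezes come from pentagons, the elements `t` with `tᵢ tᵢ₊₂ = 1 - tᵢ₊₁`, and the condition on `a`
again takes the form `∑ dᵢ tᵢ = e'` with distinct conjugates `dᵢ`. Over the algebraic closure this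
becomes a polynomial equation of degree `2q + 1` for `t`. Were no root a pentagon, all the roots
would be simple, yet a certain function of `t` would take at most `q` values on them, each at most
twice. So some root is a pentagon; it satisfies `σ⁵(t) = t`, hence lies in `K`.
-/

/-- `c` runs through a cycle of `σ` whose length divides `n`: for `σ` of order `n`, the entry
`c i` is the conjugate `σ ^ i` of `c 0`. Indexing by `ZMod n` makes index arithmetic wrap around. -/
def IsCyclicOrbit {X : Type*} {n : ℕ} (σ : X → X) (c : ZMod n → X) : Prop :=
  ∀ i, σ (c i) = c (i + 1)

/-- The conjugates `x, σ x, …, σⁿ⁻¹ x` of `x`, indexed by `ZMod n`. -/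
def conjugates {X : Type*} (σ : X → X) (n : ℕ) (x : X) : ZMod n → X :=
  fun i ↦ σ^[i.val] x

section CyclicOrbit

variable {X : Type*} {n : ℕ} {σ : X → X} {c d : ZMod n → X}

lemma conjugates_zero (x : X) : conjugates σ n x 0 = x := by
  rw [conjugates, ZMod.val_zero, Function.iterate_zero_apply]

lemma IsCyclicOrbit.iterate_apply (hc : IsCyclicOrbit σ c) (k : ℕ) (i : ZMod n) :
    σ^[k] (c i) = c (i + k) := by
  induction k with
  | zero => simp
  | succ k ih => rw [Function.iterate_succ_apply', ih, hc, Nat.cast_succ, add_assoc]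

lemma IsCyclicOrbit.shift (hc : IsCyclicOrbit σ c) (k : ZMod n) :
    IsCyclicOrbit σ fun i ↦ c (i + k) :=
  fun i ↦ by rw [hc, add_right_comm]

section NeZero

variable [NeZero n]

lemma isCyclicOrbit_conjugates {x : X} (hx : Function.IsPeriodicPt σ n x) :
    IsCyclicOrbit σ (conjugates σ n x) := by
  intro i
  have hval : (i + 1).val = (i.val + 1) % n := by
    rw [← ZMod.val_natCast, Nat.cast_add, ZMod.natCast_zmod_val, Nat.cast_one]
  rw [conjugates, conjugates, hval, hx.iterate_mod_apply, Function.iterate_succ_apply']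

namespace IsCyclicOrbit

lemma iterate_val_apply (hc : IsCyclicOrbit σ c) (i j : ZMod n) : σ^[j.val] (c i) = c (i + j) := by
  rw [hc.iterate_apply, ZMod.natCast_zmod_val]

lemma conjugates_apply (hc : IsCyclicOrbit σ c) (i j : ZMod n) :
    conjugates σ n (c i) j = c (i + j) :=
  hc.iterate_val_apply i j

lemma eq_of_apply_eq (hc : IsCyclicOrbit σ c) (hd : IsCyclicOrbit σ d) {i : ZMod n}
    (h : c i = d i) : c = d := by
  ext j
  rw [← add_sub_cancel i j, ← hc.iterate_val_apply, ← hd.iterate_val_apply, h]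

end IsCyclicOrbit

end NeZero

lemma IsCyclicOrbit.injective [Fact n.Prime] (hc : IsCyclicOrbit σ c) {i j : ZMod n}
    (h : c i ≠ c j) : Function.Injective c := by
  intro k l hkl
  by_contra hne
  have hperiod : Function.Periodic c (l - k) := by
    refine congrFun (hc.shift (l - k) |>.eq_of_apply_eq hc (i := k) ?_)
    rw [add_sub_cancel, hkl]
  have hmul := hperiod.nat_mul ((j - i) / (l - k)).val i
  rw [ZMod.natCast_zmod_val, div_mul_cancel₀ _ (sub_ne_zero.2 (Ne.symm hne)),
    add_sub_cancel] at hmul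
  exact h hmul.symm

end CyclicOrbit

section Endomorphism

variable {F K : Type*} [CommRing F] [CommRing K] [Algebra F K] {n : ℕ} {σ : K →ₐ[F] K}

namespace IsCyclicOrbit

variable {c d : ZMod n → K}

lemma const {e : K} (he : σ e = e) : IsCyclicOrbit σ fun _ : ZMod n ↦ e :=
  fun _ ↦ he

lemma add (hc : IsCyclicOrbit σ c) (hd : IsCyclicOrbit σ d) :
    IsCyclicOrbit σ fun i ↦ c i + d i :=
  fun i ↦ by rw [map_add, hc, hd]

lemma sub (hc : IsCyclicOrbit σ c) (hd : IsCyclicOrbit σ d) :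
    IsCyclicOrbit σ fun i ↦ c i - d i :=
  fun i ↦ by rw [map_sub, hc, hd]

lemma mul (hc : IsCyclicOrbit σ c) (hd : IsCyclicOrbit σ d) :
    IsCyclicOrbit σ fun i ↦ c i * d i :=
  fun i ↦ by rw [map_mul, hc, hd]

variable [NeZero n]

lemma map_sum (hc : IsCyclicOrbit σ c) : σ (∑ i, c i) = ∑ i, c i := by
  rw [_root_.map_sum, ← Equiv.sum_comp (Equiv.addRight 1) c]
  exact Finset.sum_congr rfl fun i _ ↦ hc i

lemma map_prod (hc : IsCyclicOrbit σ c) : σ (∏ i, c i) = ∏ i, c i := by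
  rw [_root_.map_prod, ← Equiv.prod_comp (Equiv.addRight 1) c]
  exact Finset.prod_congr rfl fun i _ ↦ hc i

lemma ne_zero (hc : IsCyclicOrbit σ c) {i : ZMod n} (hi : c i ≠ 0) (j : ZMod n) : c j ≠ 0 :=
  fun hj ↦ hi (congrFun (hc.eq_of_apply_eq (const (map_zero σ)) hj) i)

lemma ne_zero_of_injective [Nontrivial (ZMod n)] (hc : IsCyclicOrbit σ c)
    (hinj : Function.Injective c) (i : ZMod n) : c i ≠ 0 := by
  obtain ⟨j, hj⟩ := exists_ne i
  exact fun hi ↦ hc.ne_zero (fun hj0 ↦ hj (hinj (hj0.trans hi.symm))) i hi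

end IsCyclicOrbit

lemma isPeriodicPt_of_orderOf_eq (hσ : orderOf σ = n) (x : K) : Function.IsPeriodicPt σ n x := by
  rw [Function.IsPeriodicPt, Function.IsFixedPt, ← AlgHom.coe_pow, ← hσ, pow_orderOf_eq_one,
    AlgHom.one_apply]

lemma conjugates_eq_pow_apply (x : K) (i : ZMod n) : conjugates σ n x i = (σ ^ i.val) x := by
  rw [conjugates, AlgHom.coe_pow]

variable [NeZero n]

lemma conjugates_conjugates (hσ : orderOf σ = n) (x : K) (i j : ZMod n) :
    conjugates σ n (conjugates σ n x i) j = conjugates σ n x (i + j) :=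
  (isCyclicOrbit_conjugates (isPeriodicPt_of_orderOf_eq hσ x)).conjugates_apply i j

lemma conjugates_add_one_eq_mul (hσ : orderOf σ = n) {x y z : K} (h : σ x = z * y * σ y)
    (i : ZMod n) : conjugates σ n x (i + 1) =
      conjugates σ n z i * conjugates σ n y i * conjugates σ n y (i + 1) := by
  have horb (x : K) := isCyclicOrbit_conjugates (isPeriodicPt_of_orderOf_eq hσ x)
  refine congrFun (((horb x).shift 1).eq_of_apply_eq
    (((horb z).mul (horb y)).mul ((horb y).shift 1)) (i := 0) ?_) i
  simpa only [← horb _ 0, conjugates_zero] using h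

end Endomorphism

section DicksonMatrix

variable {F K : Type*} [CommRing F] [Field K] [Algebra F K] {n : ℕ} [NeZero n] {σ : K →ₐ[F] K}

lemma exists_sum_mul_conjugates_ne_zero (hσ : orderOf σ = n) {A : ZMod n → K} (hA : A ≠ 0) :
    ∃ x, ∑ i, A i * conjugates σ n x i ≠ 0 := by
  have hinj : Function.Injective fun i : ZMod n ↦ σ ^ i.val := fun i j hij ↦
    ZMod.val_injective n <| pow_injOn_Iio_orderOf
      (hσ ▸ ZMod.val_lt i : i.val < orderOf σ) (hσ ▸ ZMod.val_lt j : j.val < orderOf σ) hij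
  have hind := (linearIndependent_algHom_toLinearMap F K K).comp _ hinj
  by_contra! hzero
  refine hA (funext (Fintype.linearIndependent_iff.1 hind A (LinearMap.ext fun x ↦ ?_)))
  simpa [conjugates] using hzero x

/-- The Dickson matrix of the operator `∑ i, a i * σ ^ i`: row `i` holds the coefficients of its
composite with `σ ^ i`, reduced by `σ ^ n = 1`. -/
def dicksonMatrix (σ : K →ₐ[F] K) (a : ZMod n → K) : Matrix (ZMod n) (ZMod n) K :=
  .of fun i j ↦ conjugates σ n (a (j - i)) i

lemma sum_mul_conjugates_of_dicksonMatrix_mulVec_eq_zero (hσ : orderOf σ = n) {a v : ZMod n → K}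
    (hv : (dicksonMatrix σ a).mulVec v = 0) (k : ZMod n) :
    ∑ i, a i * conjugates σ n (v (i - k)) k = 0 := by
  have hrow : ∑ j, conjugates σ n (a (j + k)) (-k) * v j = 0 := by
    simpa [dicksonMatrix, Matrix.mulVec, dotProduct] using congrFun hv (-k)
  have himage := congrArg (σ ^ k.val) hrow
  simp only [map_sum, map_mul, map_zero, ← conjugates_eq_pow_apply, conjugates_conjugates hσ,
    neg_add_cancel] at himage
  rw [← Equiv.sum_comp (Equiv.addRight k)]
  simpa [conjugates] using himage

-- A kernel vector `v` of the Dickson matrix makes every `u = ∑ i, σ ^ i (v (-i) * x)` a solution;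
-- by independence of the powers of `σ` some `x` gives `u ≠ 0`.
lemma exists_ne_zero_of_det_dicksonMatrix_eq_zero (hσ : orderOf σ = n) {a : ZMod n → K}
    (ha : (dicksonMatrix σ a).det = 0) : ∃ u ≠ 0, ∑ i, a i * conjugates σ n u i = 0 := by
  obtain ⟨v, hv, hker⟩ := Matrix.exists_mulVec_eq_zero_iff.2 ha
  let A : ZMod n → K := fun k ↦ conjugates σ n (v (-k)) k
  have hA : A ≠ 0 := by
    obtain ⟨i, hi⟩ := Function.ne_iff.1 hv
    refine Function.ne_iff.2 ⟨-i, ?_⟩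
    rw [Pi.zero_apply] at hi ⊢
    simpa only [A, neg_neg, conjugates_eq_pow_apply, ne_eq, map_eq_zero] using hi
  obtain ⟨x, hx⟩ := exists_sum_mul_conjugates_ne_zero hσ hA
  refine ⟨_, hx, ?_⟩
  calc ∑ i, a i * conjugates σ n (∑ k, A k * conjugates σ n x k) i
      = ∑ i, ∑ k, a i * conjugates σ n (v (-k)) (k + i) * conjugates σ n x (k + i) := by
        refine Finset.sum_congr rfl fun i _ ↦ ?_
        rw [conjugates_eq_pow_apply, map_sum, Finset.mul_sum]
        simp only [A, map_mul, ← conjugates_eq_pow_apply, conjugates_conjugates hσ, mul_assoc]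
    _ = ∑ i, ∑ k, a i * conjugates σ n (v (i - k)) k * conjugates σ n x k := by
        refine Finset.sum_congr rfl fun i _ ↦ ?_
        rw [← Equiv.sum_comp (Equiv.addRight i) fun k ↦
          a i * conjugates σ n (v (i - k)) k * conjugates σ n x k]
        simp only [Equiv.coe_addRight, sub_add_cancel_right]
    _ = ∑ k, (∑ i, a i * conjugates σ n (v (i - k)) k) * conjugates σ n x k := by
        rw [Finset.sum_comm]
        simp only [Finset.sum_mul]
    _ = 0 := by
        simp only [sum_mul_conjugates_of_dicksonMatrix_mulVec_eq_zero hσ hker, zero_mul,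
          Finset.sum_const_zero]

end DicksonMatrix

instance fact_prime_five : Fact (Nat.Prime 5) :=
  ⟨Nat.prime_five⟩

lemma sum_zmod_five {M : Type*} [AddCommMonoid M] (f : ZMod 5 → M) :
    ∑ i, f i = f 0 + f 1 + f 2 + f 3 + f 4 :=
  Fin.sum_univ_five f

lemma prod_zmod_five {M : Type*} [CommMonoid M] (f : ZMod 5 → M) :
    ∏ i, f i = f 0 * f 1 * f 2 * f 3 * f 4 :=
  Fin.prod_univ_five f

/-- A Coxeter frieze pattern of width two, given by its first row: its recurrence
`x (i + 2) + a i * x (i + 1) + x i = 0` has only `5`-periodic solutions. -/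
def IsFrieze {R : Type*} [CommRing R] (a : ZMod 5 → R) : Prop :=
  ∀ i, a i * a (i + 1) = 1 + a (i + 3)

section Frieze

variable {R : Type*} [CommRing R] {a : ZMod 5 → R}

lemma IsFrieze.shift (ha : IsFrieze a) (k : ZMod 5) : IsFrieze fun i ↦ a (k + i) :=
  fun i ↦ by simpa only [add_assoc] using ha (k + i)

lemma IsFrieze.mul_mul (ha : IsFrieze a) (i : ZMod 5) :
    a i * a (i + 1) * a (i + 2) = 1 + a i + a (i + 2) := by
  have h₀ : a i * a (i + 1) = 1 + a (i + 3) := ha i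
  have h₂ : a (i + 2) * a (i + 3) = 1 + a (i + 0) := ha.shift i 2
  rw [add_zero] at h₂
  linear_combination a (i + 2) * h₀ + h₂

lemma IsFrieze.prod_eq (ha : IsFrieze a) : ∏ i, a i = 3 + ∑ i, a i := by
  have h₀ : a 0 * a 1 = 1 + a 3 := ha 0
  have h₂ : a 2 * a 3 = 1 + a 0 := ha 2
  have h₃ : a 3 * a 4 = 1 + a 1 := ha 3
  have h₄ : a 4 * a 0 = 1 + a 2 := ha 4
  rw [sum_zmod_five, prod_zmod_five]
  linear_combination a 2 * a 3 * a 4 * h₀ + (1 + a 3) * a 4 * h₂ + (1 + a 0) * h₃ + h₄ + h₀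

/-- The determinant of the Dickson matrix of the operator `A 0 + B 0 * σ + σ ^ 2`, expanded into
monomials in the conjugates of its coefficients. -/
def trinomialDet {R : Type*} [CommRing R] (A B : ZMod 5 → R) : R :=
  ∏ i, A i + ∏ i, B i + 1 + ∑ i, A i * A (i + 2) * B (i + 3)
    - ∑ i, A i * B (i + 1) * B (i + 2) * B (i + 3)

lemma IsFrieze.trinomialDet_eq (ha : IsFrieze a) {α β γ : ZMod 5 → R}
    (hα : ∀ i, α (i + 1) = γ i * β i * β (i + 1)) :
    trinomialDet α (fun i ↦ a i * β i) =
      (∏ i, β i) * (∑ i, (1 - γ (i + 1)) * (1 - γ (i + 3)) * a i + 3 - ∑ i, γ i +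
        (∏ i, γ i) * ∏ i, β i) + 1 := by
  have hprod := ha.prod_eq
  have h₀ := ha.mul_mul 0
  have h₁ := ha.mul_mul 1
  have h₂ := ha.mul_mul 2
  have h₃ := ha.mul_mul 3
  have h₄ := ha.mul_mul 4
  have hα₀ := hα 0
  have hα₁ := hα 1
  have hα₂ := hα 2
  have hα₃ := hα 3
  have hα₄ := hα 4
  simp only [trinomialDet, sum_zmod_five, prod_zmod_five] at hprod ⊢
  reduce_mod_char at *
  rw [hα₀, hα₁, hα₂, hα₃, hα₄]
  linear_combination β 0 * β 1 * β 2 * β 3 * β 4 *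
    (hprod - γ 4 * h₁ - γ 0 * h₂ - γ 1 * h₃ - γ 2 * h₄ - γ 3 * h₀)

end Frieze

section FriezeOperator

variable {F K : Type*} [CommRing F] [Field K] [Algebra F K] {σ : K →ₐ[F] K} {a : ZMod 5 → K}

-- `σ⁵ - 1 = (σ² + a₀σ + 1) ∘ (σ³ - a₃σ² + a₀σ - 1)`.
lemma IsFrieze.cofactor_mem_ker (hσ : orderOf σ = 5) (horb : IsCyclicOrbit σ a)
    (ha : IsFrieze a) (l : K) :
    letI x := σ (σ (σ l)) - a 3 * σ (σ l) + a 0 * σ l - l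
    σ (σ x) + a 0 * σ x + x = 0 := by
  have hperiod : σ (σ (σ (σ (σ l)))) = l := isPeriodicPt_of_orderOf_eq hσ l
  have h₀ : σ (a 0) = a 1 := horb 0
  have h₁ : σ (a 1) = a 2 := horb 1
  have h₃ : σ (a 3) = a 4 := horb 3
  have h₄ : σ (a 4) = a 0 := horb 4
  have hleft : a 4 * a 0 = 1 + a 2 := ha 4
  have hright : a 0 * a 1 = 1 + a 3 := ha 0
  simp only [map_add, map_sub, map_mul, h₀, h₁, h₃, h₄]
  linear_combination hperiod - σ (σ (σ l)) * hleft + σ (σ l) * hright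

lemma exists_add_mul_apply_ne_zero (hσ : orderOf σ = 5) {A : Fin 5 → K} (hA : A ≠ 0) :
    ∃ x, A 0 * x + A 1 * σ x + A 2 * σ (σ x) + A 3 * σ (σ (σ x)) + A 4 * σ (σ (σ (σ x))) ≠ 0 := by
  obtain ⟨x, hx⟩ := exists_sum_mul_conjugates_ne_zero (n := 5) hσ hA
  exact ⟨x, fun h ↦ hx ((sum_zmod_five _).trans h)⟩

lemma IsFrieze.exists_independent_solutions (hσ : orderOf σ = 5) (horb : IsCyclicOrbit σ a)
    (ha : IsFrieze a) :
    ∃ x y, x * σ y ≠ y * σ x ∧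
      σ (σ x) + a 0 * σ x + x = 0 ∧ σ (σ y) + a 0 * σ y + y = 0 := by
  let P (l : K) := σ (σ (σ l)) - a 3 * σ (σ l) + a 0 * σ l - l
  obtain ⟨l, hl⟩ : ∃ l, P l ≠ 0 := by
    obtain ⟨l, hl⟩ := exists_add_mul_apply_ne_zero hσ (A := ![-1, a 0, -a 3, 1, 0])
      (Function.ne_iff.2 ⟨3, one_ne_zero⟩)
    refine ⟨l, fun hP ↦ hl ?_⟩
    simp only [P] at hP
    simp only [Matrix.cons_val, Matrix.cons_val_zero, Matrix.cons_val_one]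
    linear_combination hP
  obtain ⟨m, hm⟩ := exists_add_mul_apply_ne_zero hσ
    (A := ![σ (P l), -(P l + a 0 * σ (P l)), a 1 * P l + a 3 * σ (P l), -(a 4 * P l + σ (P l)),
      P l])
    (Function.ne_iff.2 ⟨4, hl⟩)
  refine ⟨P l, P m, fun h ↦ hm ?_, ha.cofactor_mem_ker hσ horb l, ha.cofactor_mem_ker hσ horb m⟩
  have h₀ : σ (a 0) = a 1 := horb 0
  have h₃ : σ (a 3) = a 4 := horb 3
  have hPm : P m = σ (σ (σ m)) - a 3 * σ (σ m) + a 0 * σ m - m := rfl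
  have hσPm : σ (P m) = σ (σ (σ (σ m))) - a 4 * σ (σ (σ m)) + a 1 * σ (σ m) - σ m := by
    simp only [P, map_add, map_sub, map_mul, h₀, h₃]
  rw [hσPm, hPm] at h
  simp only [Matrix.cons_val, Matrix.cons_val_zero, Matrix.cons_val_one]
  linear_combination h

end FriezeOperator

section TrinomialDet

variable {F K : Type*} [CommRing F] [Field K] [Algebra F K] {σ : K →ₐ[F] K} {A B : ZMod 5 → K}

lemma dicksonMatrix_trinomial (hA : IsCyclicOrbit σ A) (hB : IsCyclicOrbit σ B) :
    dicksonMatrix (n := 5) σ ![A 0, B 0, 1, 0, 0] =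
      !![A 0, B 0, 1, 0, 0; 0, A 1, B 1, 1, 0; 0, 0, A 2, B 2, 1; 1, 0, 0, A 3, B 3;
        B 4, 1, 0, 0, A 4] := by
  have hcoeff (k : Fin 5) (i : ZMod 5) :
      conjugates σ 5 (![A 0, B 0, 1, 0, 0] k) i = ![A i, B i, 1, 0, 0] k := by
    have hAi := hA.conjugates_apply 0 i
    have hBi := hB.conjugates_apply 0 i
    rw [zero_add] at hAi hBi
    fin_cases k
    exacts [hAi, hBi, (IsCyclicOrbit.const (map_one σ)).conjugates_apply 0 i,
      (IsCyclicOrbit.const (map_zero σ)).conjugates_apply 0 i,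
      (IsCyclicOrbit.const (map_zero σ)).conjugates_apply 0 i]
  ext i j
  refine (hcoeff (j - i) i).trans ?_
  fin_cases i <;> fin_cases j <;> rfl

lemma det_dicksonMatrix_trinomial (hA : IsCyclicOrbit σ A) (hB : IsCyclicOrbit σ B) :
    (dicksonMatrix (n := 5) σ ![A 0, B 0, 1, 0, 0]).det = trinomialDet A B := by
  have hdet : (!![A 0, B 0, 1, 0, 0; 0, A 1, B 1, 1, 0; 0, 0, A 2, B 2, 1; 1, 0, 0, A 3, B 3;
        B 4, 1, 0, 0, A 4] : Matrix (Fin 5) (Fin 5) K).det =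
      A 0 * A 1 * A 2 * A 3 * A 4 + B 0 * B 1 * B 2 * B 3 * B 4 + 1
        + (A 0 * A 2 * B 3 + A 1 * A 3 * B 4 + A 2 * A 4 * B 0 + A 3 * A 0 * B 1 + A 4 * A 1 * B 2)
        - (A 0 * B 1 * B 2 * B 3 + A 1 * B 2 * B 3 * B 4 + A 2 * B 3 * B 4 * B 0
          + A 3 * B 4 * B 0 * B 1 + A 4 * B 0 * B 1 * B 2) := by
    simp [Matrix.det_succ_row_zero, Fin.sum_univ_succ, Fin.succAbove]
    ring
  rw [dicksonMatrix_trinomial hA hB]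
  refine hdet.trans ?_
  simp only [trinomialDet, sum_zmod_five, prod_zmod_five]
  rfl

lemma exists_ne_zero_of_trinomialDet_eq_zero (hσ : orderOf σ = 5) (hA : IsCyclicOrbit σ A)
    (hB : IsCyclicOrbit σ B) (h : trinomialDet A B = 0) :
    ∃ u ≠ 0, A 0 * u + B 0 * σ u + σ (σ u) = 0 := by
  rw [← det_dicksonMatrix_trinomial hA hB] at h
  obtain ⟨u, hu0, hu⟩ := exists_ne_zero_of_det_dicksonMatrix_eq_zero hσ h
  have hsum : A 0 * u + B 0 * σ u + 1 * σ (σ u) + 0 * σ (σ (σ u)) + 0 * σ (σ (σ (σ u))) = 0 :=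
    (sum_zmod_five _).symm.trans hu
  exact ⟨u, hu0, by linear_combination hsum⟩

end TrinomialDet

section Scattered

variable {F K : Type*} [CommRing F] [Field K] [Algebra F K] {σ : K →ₐ[F] K}

-- For `w = u⁻¹` the difference of the two sides is `(x σ(y) - y σ(x)) w σ(w) σ²(w)` times the left
-- side of `hu`.
lemma mul_eq_mul_of_solutions {a α β u x y : K} (hu0 : u ≠ 0)
    (hu : α * u + a * β * σ u + σ (σ u) = 0) (hx : σ (σ x) + a * σ x + x = 0)
    (hy : σ (σ y) + a * σ y + y = 0) :
    letI X := u⁻¹ * x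
    letI Y := u⁻¹ * y
    (X - α * σ (σ X)) * (σ Y - β * σ (σ Y)) = (σ X - β * σ (σ X)) * (Y - α * σ (σ Y)) := by
  have hσu : σ u ≠ 0 := (map_ne_zero σ).2 hu0
  have hσσu : σ (σ u) ≠ 0 := (map_ne_zero σ).2 hσu
  have hx' : σ (σ x) = -(a * σ x) - x := by linear_combination hx
  have hy' : σ (σ y) = -(a * σ y) - y := by linear_combination hy
  simp only [map_mul, map_inv₀, hx', hy']
  field_simp
  linear_combination σ (σ u) * (x * σ y - y * σ x) * hu

lemma not_linearIndependent_pair_of_mul_eq_mul {P Q : K × K} (h : P.1 * Q.2 = P.2 * Q.1) :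
    ¬ LinearIndependent K ![P, Q] := by
  intro hind
  rw [LinearIndependent.pair_iff] at hind
  have hQ := hind Q.1 (-P.1) <| Prod.ext
    (by simp only [Prod.fst_add, Prod.smul_fst, smul_eq_mul, Prod.fst_zero]; ring)
    (by simp only [Prod.snd_add, Prod.smul_snd, smul_eq_mul, Prod.snd_zero]; linear_combination -h)
  have hQ' := hind Q.2 (-P.2) <| Prod.ext
    (by simp only [Prod.fst_add, Prod.smul_fst, smul_eq_mul, Prod.fst_zero]; linear_combination h)
    (by simp only [Prod.snd_add, Prod.smul_snd, smul_eq_mul, Prod.snd_zero]; ring)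
  have hP : P = 0 := Prod.ext (neg_eq_zero.1 hQ.2) (neg_eq_zero.1 hQ'.2)
  exact one_ne_zero (hind 1 0 (by simp [hP])).1

end Scattered

lemma IsMaxScattered.trinomialDet_ne_zero {K : Type*} [Field K] {F : Subfield K} {q : ℕ}
    {σ : K →ₐ[F] K} (hpow : ∀ x, σ x = x ^ q) (hσ : orderOf σ = 5) {a α β : ZMod 5 → K}
    (hα : IsCyclicOrbit σ α) (hβ : IsCyclicOrbit σ β) (haorb : IsCyclicOrbit σ a)
    (ha : IsFrieze a) (hms : IsMaxScattered q F (α 0) (β 0)) :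
    trinomialDet α (fun i ↦ a i * β i) ≠ 0 := by
  intro hdet
  obtain ⟨u, hu0, hu⟩ := exists_ne_zero_of_trinomialDet_eq_zero hσ hα (haorb.mul hβ) hdet
  obtain ⟨x, y, hxy, hx, hy⟩ := ha.exists_independent_solutions hσ haorb
  have hx0 : x ≠ 0 := by rintro rfl; simp at hxy
  have hy0 : y ≠ 0 := by rintro rfl; simp at hxy
  have hT (z : K) : Tmap q (α 0) (β 0) z = (z - α 0 * σ (σ z), σ z - β 0 * σ (σ z)) := by
    simp only [Tmap, hpow, ← pow_mul, sq]
  have hmem := hms.2 (u⁻¹ * x) (u⁻¹ * y) (mul_ne_zero (inv_ne_zero hu0) hx0)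
    (mul_ne_zero (inv_ne_zero hu0) hy0)
    (not_linearIndependent_pair_of_mul_eq_mul (by
      rw [hT, hT]; exact mul_eq_mul_of_solutions hu0 hu hx hy))
  rw [mul_div_mul_left _ _ (inv_ne_zero hu0)] at hmem
  have hfix : σ (y / x) = y / x := σ.commutes ⟨_, hmem⟩
  rw [map_div₀, div_eq_div_iff ((map_ne_zero σ).2 hx0) hx0] at hfix
  exact hxy (by linear_combination hfix)

/-- `t` is a `5`-cycle of the Lyness map `(x, y) ↦ (y, (1 - y) / x)`. Up to signs these are the
relations of Gauss's *pentagramma mirificum*. -/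
def IsPentagon {R : Type*} [CommRing R] (t : ZMod 5 → R) : Prop :=
  ∀ i, t i * t (i + 2) = 1 - t (i + 1)

section Pentagon

variable {R : Type*} [CommRing R] {t : ZMod 5 → R}

lemma IsPentagon.shift (ht : IsPentagon t) (k : ZMod 5) : IsPentagon fun i ↦ t (k + i) :=
  fun i ↦ by simpa only [add_assoc] using ht (k + i)

lemma IsPentagon.prod_eq (ht : IsPentagon t) : ∏ i, t i = ∑ i, t i - 3 := by
  have h₀ : t 0 * t 2 = 1 - t 1 := ht 0
  have h₁ : t 1 * t 3 = 1 - t 2 := ht 1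
  have h₂ : t 2 * t 4 = 1 - t 3 := ht 2
  have h₄ : t 4 * t 1 = 1 - t 0 := ht 4
  rw [sum_zmod_five, prod_zmod_five]
  linear_combination t 1 * t 3 * t 4 * h₀ + (1 - t 1) * t 4 * h₁ + (t 1 - 1) * h₂ - h₄ - h₁

variable {F K : Type*} [CommRing F] [Field K] [Algebra F K] {σ : K →ₐ[F] K} {t : ZMod 5 → K}

/-- The frieze attached to a pentagon `t`. Unlike `i ↦ -t (2 * i)`, which is a frieze as well, it is
a cyclic orbit whenever `t` is one. -/
def pentagonFrieze (t : ZMod 5 → K) (i : ZMod 5) : K :=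
  t (i + 2) / (t (i + 1) * t (i + 3))

lemma IsPentagon.isFrieze_pentagonFrieze (ht : IsPentagon t) (h0 : ∀ i, t i ≠ 0) :
    IsFrieze (pentagonFrieze t) := by
  intro i
  have h₁ := h0 (i + 1)
  have h₂ := h0 (i + 2)
  have h₃ := h0 (i + 3)
  have h₄ := h0 (i + 4)
  have hrel : t (i + 4) * t (i + 1) = 1 - t (i + 0) := ht.shift i 4
  simp only [pentagonFrieze, add_assoc]
  change t (i + 2) / (t (i + 1) * t (i + 3)) * (t (i + 3) / (t (i + 2) * t (i + 4))) =
    1 + t (i + 0) / (t (i + 4) * t (i + 1))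
  field_simp
  linear_combination -hrel

lemma IsPentagon.pentagonFrieze_mul_prod (ht : IsPentagon t) (h0 : ∀ i, t i ≠ 0) (i : ZMod 5) :
    pentagonFrieze t i * ∏ j, t j = 2 - t (i + 1) - t (i + 2) - t (i + 3) := by
  have h₁ := h0 (i + 1)
  have h₃ := h0 (i + 3)
  have hrel₀ : t i * t (i + 2) = 1 - t (i + 1) := ht i
  have hrel₁ : t (i + 1) * t (i + 3) = 1 - t (i + 2) := ht.shift i 1
  have hrel₂ : t (i + 2) * t (i + 4) = 1 - t (i + 3) := ht.shift i 2
  have hprod : ∏ j, t j = t i * t (i + 1) * t (i + 2) * t (i + 3) * t (i + 4) := by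
    rw [← Equiv.prod_comp (Equiv.addLeft i) t, prod_zmod_five]
    simp only [Equiv.coe_addLeft, add_zero]
  rw [hprod, pentagonFrieze]
  field_simp
  linear_combination t (i + 2) * t (i + 4) * hrel₀ + (1 - t (i + 1)) * hrel₂ + hrel₁

lemma IsPentagon.ne_zero (ht : IsPentagon t) (horb : IsCyclicOrbit σ t) (i : ZMod 5) :
    t i ≠ 0 := by
  intro hi
  have hzero : t = fun _ ↦ 0 := horb.eq_of_apply_eq (.const (map_zero σ)) hi
  simpa [hzero] using ht 0

lemma IsCyclicOrbit.pentagonFrieze (horb : IsCyclicOrbit σ t) :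
    IsCyclicOrbit σ (pentagonFrieze t) := by
  intro i
  simp only [_root_.pentagonFrieze, map_div₀, map_mul, horb _, add_right_comm i 1]

end Pentagon

section PentagonForm

/-- The equation `∑ i, c i * t i = e` for a pentagon `t`, multiplied by `t 0 * t 1` and expressed in
terms of `x = t 0` and `y = t 1`, which determine the pentagon. -/
def pentagonForm {R : Type*} [CommRing R] (c : ZMod 5 → R) (e x y : R) : R :=
  (c 0 * y - c 4) * x ^ 2 + (c 1 * y ^ 2 - e * y + c 3 + c 4) * x + (c 2 * y - c 3) * (1 - y)

lemma IsPentagon.mul_sum_sub_eq_pentagonForm {R : Type*} [CommRing R] {t : ZMod 5 → R}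
    (ht : IsPentagon t) (c : ZMod 5 → R) (e : R) :
    t 0 * t 1 * (∑ i, c i * t i - e) = pentagonForm c e (t 0) (t 1) := by
  have h₀ : t 0 * t 2 = 1 - t 1 := ht 0
  have h₁ : t 1 * t 3 = 1 - t 2 := ht 1
  have h₄ : t 4 * t 1 = 1 - t 0 := ht 4
  rw [sum_zmod_five, pentagonForm]
  linear_combination (c 2 * t 1 - c 3) * h₀ + c 3 * t 0 * h₁ + c 4 * t 0 * h₄

variable {F K : Type*} [CommRing F] [Field K] [Algebra F K] {σ : K →ₐ[F] K} {x : K}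

lemma ne_zero_of_mul_apply_apply (hx : x * σ (σ x) = 1 - σ x) : x ≠ 0 := by
  rintro rfl
  simp at hx

lemma isPeriodicPt_of_mul_apply_apply (hx : x * σ (σ x) = 1 - σ x) :
    Function.IsPeriodicPt σ 5 x := by
  have hx₀ := ne_zero_of_mul_apply_apply hx
  have hx₁ := congrArg σ hx
  have hx₂ := congrArg σ hx₁
  have hx₃ := congrArg σ hx₂
  simp only [map_sub, map_mul, map_one] at hx₁ hx₂ hx₃
  have hx₄ : x * σ (σ (σ x)) = 1 - σ (σ (σ (σ x))) := by
    refine mul_left_cancel₀ ((map_ne_zero σ).2 ((map_ne_zero σ).2 hx₀)) ?_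
    linear_combination σ (σ (σ x)) * hx - hx₁ + hx₂
  change σ (σ (σ (σ (σ x)))) = x
  refine mul_left_cancel₀ ((map_ne_zero σ).2 ((map_ne_zero σ).2 ((map_ne_zero σ).2 hx₀))) ?_
  linear_combination hx₃ - hx₄

lemma isPentagon_conjugates (hx : x * σ (σ x) = 1 - σ x) : IsPentagon (conjugates σ 5 x) := by
  have horb := isCyclicOrbit_conjugates (isPeriodicPt_of_mul_apply_apply hx)
  exact congrFun <| (horb.mul (horb.shift 2)).eq_of_apply_eq
    ((IsCyclicOrbit.const (map_one σ)).sub (horb.shift 1)) (i := 0) hx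

variable {c : ZMod 5 → K} {e : K}

lemma IsCyclicOrbit.mul_ne_mul_of_injective (hc : IsCyclicOrbit σ c) (hinj : Function.Injective c)
    (i : ZMod 5) : c i * c (i + 2) ≠ c (i + 1) * c (i + 3) := by
  intro hi
  have hall := congrFun <| (hc.mul (hc.shift 2)).eq_of_apply_eq ((hc.shift 1).mul (hc.shift 3)) hi
  have h₀ : c 0 * c 2 = c 1 * c 3 := hall 0
  have h₁ : c 1 * c 3 = c 2 * c 4 := hall 1
  have h24 : c 0 = c 4 :=
    mul_right_cancel₀ (hc.ne_zero_of_injective hinj 2) (by linear_combination h₀ + h₁)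
  exact absurd (hinj h24) (by decide)

lemma mul_eq_mul_of_pentagonForm_eq_zero (hc : IsCyclicOrbit σ c) (he : σ e = e)
    (hx : pentagonForm c e x (σ x) = 0) (hpent : x * σ (σ x) ≠ 1 - σ x) :
    x * (c 0 * σ x - c 4) = σ (σ x) * (c 2 * σ x - c 3) := by
  have h₀ : σ (c 0) = c 1 := hc 0
  have h₁ : σ (c 1) = c 2 := hc 1
  have h₂ : σ (c 2) = c 3 := hc 2
  have h₃ : σ (c 3) = c 4 := hc 3
  have h₄ : σ (c 4) = c 0 := hc 4
  have hσx := congrArg σ hx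
  simp only [pentagonForm, map_add, map_sub, map_mul, map_pow, map_zero, map_one,
    h₀, h₁, h₂, h₃, h₄, he] at hx hσx
  refine sub_eq_zero.1 (mul_left_cancel₀ (sub_ne_zero.2 hpent) ?_)
  linear_combination σ (σ x) * hx - x * hσx

lemma pentagonForm_derivative_ne_zero (hc : IsCyclicOrbit σ c) (hinj : Function.Injective c)
    (he : σ e = e) (hx : pentagonForm c e x (σ x) = 0) (hpent : x * σ (σ x) ≠ 1 - σ x) :
    2 * (c 0 * σ x - c 4) * x + (c 1 * σ x ^ 2 - e * σ x + c 3 + c 4) ≠ 0 := by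
  intro hder
  have hrel := mul_eq_mul_of_pentagonForm_eq_zero hc he hx hpent
  have hx0 : x ≠ 0 := by
    rintro rfl
    refine hc.ne_zero_of_injective hinj 3 ?_
    simp only [pentagonForm, map_zero] at hx
    linear_combination -hx
  have hA : c 0 * σ x - c 4 = 0 := by
    refine mul_left_cancel₀ (mul_ne_zero hx0 (sub_ne_zero.2 hpent)) ?_
    rw [pentagonForm] at hx
    linear_combination -σ (σ x) * hx + σ (σ x) * x * hder - (1 - σ x) * hrel
  have hG : c 2 * σ x - c 3 = 0 := by
    rw [hA, mul_zero] at hrel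
    exact (mul_eq_zero.1 hrel.symm).resolve_left ((map_ne_zero σ).2 ((map_ne_zero σ).2 hx0))
  exact hc.mul_ne_mul_of_injective hinj 2 (by
    change c 2 * c 4 = c 3 * c 0
    linear_combination c 0 * hG - c 2 * hA)

/-- On the zeros of the pentagon form that do not come from pentagons, this function of `x` is
multiplied by a constant under `σ`, so it takes few values there. -/
def hyperbolaForm (c : ZMod 5 → K) (x y : K) : K :=
  x * y - c 2 / c 1 * y - c 4 / c 0 * x

lemma mul_apply_hyperbolaForm (hc : IsCyclicOrbit σ c) (hinj : Function.Injective c)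
    (he : σ e = e) (hx : pentagonForm c e x (σ x) = 0) (hpent : x * σ (σ x) ≠ 1 - σ x) :
    c 2 * σ (hyperbolaForm c x (σ x)) = c 0 * hyperbolaForm c x (σ x) := by
  have h₀ : σ (c 0) = c 1 := hc 0
  have h₁ : σ (c 1) = c 2 := hc 1
  have h₂ : σ (c 2) = c 3 := hc 2
  have h₄ : σ (c 4) = c 0 := hc 4
  have hc₀ := hc.ne_zero_of_injective hinj 0
  have hc₁ := hc.ne_zero_of_injective hinj 1
  have hc₂ := hc.ne_zero_of_injective hinj 2
  have hrel := mul_eq_mul_of_pentagonForm_eq_zero hc he hx hpent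
  simp only [hyperbolaForm, map_sub, map_mul, map_div₀, h₀, h₁, h₂, h₄]
  field_simp
  linear_combination -c 1 * hrel

end PentagonForm

section Fibre

open Polynomial

variable {K : Type*} [Field K]

lemma card_le_two_of_hyperbola_of_line {S : Finset K} {y : K → K} (hy : Function.Injective y)
    {a b κ l m n : K} (hhyp : ∀ x ∈ S, x * y x - a * y x - b * x = κ)
    (hline : ∀ x ∈ S, l * x + m * y x + n = 0) (hne : l ≠ 0 ∨ m ≠ 0 ∨ n ≠ 0) : S.card ≤ 2 := by
  classical
  by_cases hκ : κ = -(a * b)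
  · have hsub : S ⊆ {a} ∪ S.filter (y · = b) := by
      intro x hx
      have hfactor : (x - a) * (y x - b) = 0 := by linear_combination hhyp x hx + hκ
      rcases mul_eq_zero.1 hfactor with h | h
      · simp [sub_eq_zero.1 h]
      · simp [hx, sub_eq_zero.1 h]
    have hcard : (S.filter (y · = b)).card ≤ 1 := Finset.card_le_one.2 fun u hu v hv ↦
      hy ((Finset.mem_filter.1 hu).2.trans (Finset.mem_filter.1 hv).2.symm)
    have hunion := Finset.card_union_le {a} (S.filter (y · = b))
    have := Finset.card_le_card hsub
    rw [Finset.card_singleton] at hunion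
    omega
  · let Q : K[X] := C l * X ^ 2 + C (n - l * a + b * m) * X + C (κ * m - a * n)
    have hQ : Q ≠ 0 := by
      intro h
      have hl : l = 0 := by simpa [Q] using congrArg (coeff · 2) h
      have h₁ : n - l * a + b * m = 0 := by simpa [Q] using congrArg (coeff · 1) h
      have h₀ : κ * m - a * n = 0 := by simpa [Q] using congrArg (coeff · 0) h
      have hm : m = 0 := by
        refine mul_left_cancel₀ (sub_ne_zero.2 hκ) ?_
        linear_combination h₀ + a * h₁ + a ^ 2 * hl
      have hn : n = 0 := by linear_combination h₁ + a * hl - b * hm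
      simp [hl, hm, hn] at hne
    have hroots : S.val ⊆ Q.roots := by
      intro x hx
      rw [mem_roots hQ]
      simp only [Q, IsRoot, eval_add, eval_mul, eval_C, eval_X, eval_pow]
      linear_combination (x - a) * hline x hx - m * hhyp x hx
    exact (card_le_degree_of_subset_roots hroots).trans natDegree_quadratic_le

variable {F : Type*} [CommRing F] [Algebra F K] {σ : K →ₐ[F] K} {c : ZMod 5 → K} {e : K}

-- Subtracting a multiple of `hyperbolaForm - κ` from the pentagon form leaves the linear form with
-- these coefficients.
lemma residualLine_ne_zero (hc : IsCyclicOrbit σ c) (hinj : Function.Injective c) {a b κ k : K}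
    (ha : c 1 * a = c 2) (hb : c 0 * b = c 4) :
    κ * c 0 - k * b + c 3 + c 4 ≠ 0 ∨ κ * c 1 - k * a + c 2 + c 3 ≠ 0 ∨ -κ * k - c 3 ≠ 0 := by
  by_contra! hzero
  obtain ⟨hl, hm, hn⟩ := hzero
  have hl' : (k - c 0) * (c 4 + κ * c 0) = 0 := by
    linear_combination -c 0 * hl - c 0 * hn - k * hb
  have hm' : (k - c 1) * (c 2 + κ * c 1) = 0 := by
    linear_combination -c 1 * hm - c 1 * hn - k * ha
  rcases mul_eq_zero.1 hl' with h₀ | h₄ <;> rcases mul_eq_zero.1 hm' with h₁ | h₂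
  · exact absurd (hinj (by linear_combination h₁ - h₀ : c 0 = c 1)) (by decide)
  · refine hc.mul_ne_mul_of_injective hinj 0 ?_
    change c 0 * c 2 = c 1 * c 3
    linear_combination c 1 * hn + c 0 * h₂ + κ * c 1 * h₀
  · refine hc.mul_ne_mul_of_injective hinj 3 ?_
    change c 3 * c 0 = c 4 * c 1
    linear_combination -c 0 * hn - c 1 * h₄ - κ * c 0 * h₁
  · refine hc.mul_ne_mul_of_injective hinj 4 (mul_left_cancel₀ (hc.ne_zero_of_injective hinj 3) ?_)
    change c 3 * (c 4 * c 1) = c 3 * (c 0 * c 2)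
    linear_combination c 3 * c 1 * h₄ - c 3 * c 0 * h₂

lemma card_le_two_of_hyperbolaForm_eq (hc : IsCyclicOrbit σ c) (hinj : Function.Injective c)
    {κ : K} {S : Finset K} (hS : ∀ x ∈ S, pentagonForm c e x (σ x) = 0)
    (hκ : ∀ x ∈ S, hyperbolaForm c x (σ x) = κ) : S.card ≤ 2 := by
  have ha : c 1 * (c 2 / c 1) = c 2 := mul_div_cancel₀ _ (hc.ne_zero_of_injective hinj 1)
  have hb : c 0 * (c 4 / c 0) = c 4 := mul_div_cancel₀ _ (hc.ne_zero_of_injective hinj 0)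
  simp only [pentagonForm, hyperbolaForm] at hS hκ
  generalize c 2 / c 1 = a at *
  generalize c 4 / c 0 = b at *
  refine card_le_two_of_hyperbola_of_line (y := σ) σ.injective hκ (fun x hx ↦ ?_)
    (residualLine_ne_zero hc hinj (κ := κ) (k := e - c 0 * a - c 1 * b) ha hb)
  linear_combination hS x hx - (c 0 * x + c 1 * σ x - (e - c 0 * a - c 1 * b)) * hκ x hx
    - x ^ 2 * hb - σ x ^ 2 * ha

end Fibre

section Count

open Polynomial

variable {K : Type*} [Field K]

lemma nodup_roots_of_derivative_ne_zero {f : K[X]}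
    (hf : ∀ x, f.IsRoot x → ¬ f.derivative.IsRoot x) : f.roots.Nodup := by
  classical
  rcases eq_or_ne f 0 with rfl | hf0
  · simp
  refine Multiset.nodup_iff_count_le_one.2 fun x ↦ not_lt.1 fun hx ↦ ?_
  rw [count_roots, one_lt_rootMultiplicity_iff_isRoot hf0] at hx
  exact hf x hx.1 hx.2

/-- The polynomial in `x` obtained from the pentagon form by substituting `y = x ^ q`. -/
noncomputable def pentagonPolynomial (q : ℕ) (c : ZMod 5 → K) (e : K) : K[X] :=
  pentagonForm (fun i ↦ C (c i)) (C e) X (X ^ q)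

variable {q : ℕ} {c : ZMod 5 → K} {e : K}

lemma eval_pentagonPolynomial (x : K) :
    (pentagonPolynomial q c e).eval x = pentagonForm c e x (x ^ q) := by
  simp [pentagonPolynomial, pentagonForm]

lemma eval_derivative_pentagonPolynomial (hq : (q : K) = 0) (x : K) :
    (pentagonPolynomial q c e).derivative.eval x =
      2 * (c 0 * x ^ q - c 4) * x + (c 1 * (x ^ q) ^ 2 - e * x ^ q + c 3 + c 4) := by
  have hX : derivative (X ^ q : K[X]) = 0 := by rw [derivative_X_pow, hq, C_0, zero_mul]
  simp only [pentagonPolynomial, pentagonForm, derivative_add, derivative_sub, derivative_mul,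
    derivative_C, derivative_one, derivative_X_sq, derivative_X, derivative_pow (X ^ q), hX,
    eval_add, eval_sub, eval_mul, eval_C, eval_pow, eval_X, eval_zero, eval_one]
  ring

lemma coeff_pentagonPolynomial (hq : 1 < q) :
    (pentagonPolynomial q c e).coeff (2 * q + 1) = c 1 := by
  have hexpand : pentagonPolynomial q c e = C (c 1) * X ^ (2 * q + 1) + C (c 0) * X ^ (q + 2)
      - C (c 2) * X ^ (2 * q) - C (c 4) * X ^ 2 - C e * X ^ (q + 1) + C (c 2 + c 3) * X ^ q
      + C (c 3 + c 4) * X ^ 1 - C (c 3) * X ^ 0 := by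
    simp only [pentagonPolynomial, pentagonForm, C_add]
    ring
  have hlower (a : K) {k : ℕ} (hk : k ≤ 2 * q) : (C a * X ^ k).coeff (2 * q + 1) = 0 := by
    rw [coeff_C_mul_X_pow, if_neg (by omega)]
  simp only [hexpand, coeff_add, coeff_sub]
  rw [coeff_C_mul_X_pow, if_pos rfl, hlower _ (by omega), hlower _ (by omega), hlower _ (by omega),
    hlower _ (by omega), hlower _ (by omega), hlower _ (by omega), hlower _ (by omega)]
  ring

variable {F : Type*} [CommRing F] [Algebra F K] {σ : K →ₐ[F] K}

lemma card_le_of_mul_pow_eq_mul {a b : K} (ha : a ≠ 0) (hq1 : 1 < q) {T : Finset K}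
    (hT : ∀ x ∈ T, a * x ^ q = b * x) : T.card ≤ q := by
  have hg : C a * X ^ q - C b * X ≠ 0 := by
    intro h
    exact ha (by simpa [coeff_X, hq1.ne] using congrArg (coeff · q) h)
  have hdeg : (C a * X ^ q - C b * X).natDegree ≤ q := by
    compute_degree
    omega
  refine (card_le_degree_of_subset_roots fun x hx ↦ ?_).trans hdeg
  rw [mem_roots hg]
  simpa [sub_eq_zero] using hT x hx

lemma card_le_of_pentagonForm_eq_zero (hpow : ∀ x, σ x = x ^ q) (hq1 : 1 < q)
    (hc : IsCyclicOrbit σ c) (hinj : Function.Injective c) (he : σ e = e) {S : Finset K}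
    (hS : ∀ x ∈ S, pentagonForm c e x (σ x) = 0) (hpent : ∀ x ∈ S, x * σ (σ x) ≠ 1 - σ x) :
    S.card ≤ 2 * q := by
  classical
  let h (x : K) := hyperbolaForm c x (σ x)
  have himage : (S.image h).card ≤ q := by
    refine card_le_of_mul_pow_eq_mul (b := c 0) (hc.ne_zero_of_injective hinj 2) hq1
      (Finset.forall_mem_image.2 fun x hx ↦ ?_)
    rw [← hpow]
    exact mul_apply_hyperbolaForm hc hinj he (hS x hx) (hpent x hx)
  have hfibre : ∀ κ ∈ S.image h, (S.filter (h · = κ)).card ≤ 2 := fun κ _ ↦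
    card_le_two_of_hyperbolaForm_eq hc hinj (e := e) (κ := κ)
      (fun x hx ↦ hS x (Finset.mem_filter.1 hx).1) (fun x hx ↦ (Finset.mem_filter.1 hx).2)
  calc S.card ≤ 2 * (S.image h).card := Finset.card_le_mul_card_image S 2 hfibre
    _ ≤ 2 * q := Nat.mul_le_mul_left 2 himage

lemma exists_pentagonForm_eq_zero [IsAlgClosed K] (hpow : ∀ x, σ x = x ^ q) (hq1 : 1 < q)
    (hq : (q : K) = 0) (hc : IsCyclicOrbit σ c) (hinj : Function.Injective c) (he : σ e = e) :
    ∃ x, pentagonForm c e x (σ x) = 0 ∧ x * σ (σ x) = 1 - σ x := by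
  classical
  by_contra! hpent
  let f := pentagonPolynomial q c e
  have hroot : ∀ x, f.IsRoot x → pentagonForm c e x (σ x) = 0 := fun x hx ↦ by
    rw [hpow, ← eval_pentagonPolynomial]
    exact hx
  have hnodup : f.roots.Nodup := nodup_roots_of_derivative_ne_zero fun x hx hder ↦ by
    refine pentagonForm_derivative_ne_zero hc hinj he (hroot x hx) (hpent x (hroot x hx)) ?_
    rw [hpow, ← eval_derivative_pentagonPolynomial hq]
    exact hder
  have hdeg : 2 * q + 1 ≤ f.natDegree := le_natDegree_of_ne_zero <| by
    rw [coeff_pentagonPolynomial hq1]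
    exact hc.ne_zero_of_injective hinj 1
  have hcard : f.roots.toFinset.card = f.natDegree := by
    rw [Multiset.toFinset_card_of_nodup hnodup, splits_iff_card_roots.1 (IsAlgClosed.splits f)]
  have hle : f.roots.toFinset.card ≤ 2 * q := by
    have hzero : ∀ x ∈ f.roots.toFinset, pentagonForm c e x (σ x) = 0 := fun x hx ↦
      hroot x (isRoot_of_mem_roots (Multiset.mem_toFinset.1 hx))
    exact card_le_of_pentagonForm_eq_zero hpow hq1 hc hinj he hzero fun x hx ↦
      hpent x (hzero x hx)
  omega

lemma exists_pentagon_sum_eq [IsAlgClosed K] (hpow : ∀ x, σ x = x ^ q) (hq1 : 1 < q)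
    (hq : (q : K) = 0) (hc : IsCyclicOrbit σ c) (hinj : Function.Injective c) (he : σ e = e) :
    ∃ t, IsCyclicOrbit σ t ∧ IsPentagon t ∧ ∑ i, c i * t i = e := by
  obtain ⟨x, hform, hx⟩ := exists_pentagonForm_eq_zero hpow hq1 hq hc hinj he
  have ht := isPentagon_conjugates hx
  have horb := isCyclicOrbit_conjugates (isPeriodicPt_of_mul_apply_apply hx)
  refine ⟨conjugates σ 5 x, horb, ht, sub_eq_zero.1 ?_⟩
  refine mul_left_cancel₀ (mul_ne_zero (ht.ne_zero horb 0) (ht.ne_zero horb 1)) ?_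
  rw [ht.mul_sum_sub_eq_pentagonForm, mul_zero]
  exact hform

end Count

section FiniteField

open FiniteField Polynomial

lemma mem_range_algebraMap_of_pow_card_eq {K L : Type*} [Field K] [Fintype K] [Field L]
    [Algebra K L] {x : L} (hx : x ^ Fintype.card K = x) : x ∈ (algebraMap K L).range := by
  have hsplits : (X ^ Fintype.card K - X : K[X]).Splits := by
    simpa using (isSplittingField_sub K K).splits
  refine hsplits.mem_range_of_isRoot (X_pow_card_sub_X_ne_zero K Fintype.one_lt_card) ?_
  simpa [sub_eq_zero] using hx

variable {F K : Type*} [Field F] [Fintype F] [Field K] [Fintype K] [Algebra F K] {c : ZMod 5 → K}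
  {e : K}

lemma exists_pentagon_sum_eq_of_card (hcard : Fintype.card K = Fintype.card F ^ 5)
    (hc : IsCyclicOrbit (frobeniusAlgHom F K) c) (hinj : Function.Injective c)
    (he : frobeniusAlgHom F K e = e) :
    ∃ t, IsCyclicOrbit (frobeniusAlgHom F K) t ∧ IsPentagon t ∧ ∑ i, c i * t i = e := by
  let ι := algebraMap K (AlgebraicClosure K)
  let φ := frobeniusAlgHom F (AlgebraicClosure K)
  have hφι (x : K) : φ (ι x) = ι (frobeniusAlgHom F K x) := by
    simp only [φ, coe_frobeniusAlgHom, map_pow]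
  obtain ⟨t, horb, hpent, hsum⟩ : ∃ t, IsCyclicOrbit φ t ∧ IsPentagon t ∧
      ∑ i, ι (c i) * t i = ι e := by
    refine exists_pentagon_sum_eq (fun x ↦ rfl) Fintype.one_lt_card ?_ (fun i ↦ ?_)
      (ι.injective.comp hinj) ?_
    · rw [← map_natCast (algebraMap F (AlgebraicClosure K)), Nat.cast_card_eq_zero, map_zero]
    · rw [hφι, hc]
    · rw [hφι, he]
  have hrange (i : ZMod 5) : t i ∈ ι.range := by
    refine mem_range_algebraMap_of_pow_card_eq ?_
    have hpow : t i ^ Fintype.card F ^ 5 = φ^[5] (t i) := (congrFun (pow_iterate _ 5) (t i)).symm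
    rw [hcard, hpow, horb.iterate_apply]
    exact congrArg t (add_zero i)
  choose s hs using hrange
  refine ⟨s, fun i ↦ ι.injective ?_, fun i ↦ ι.injective ?_, ι.injective ?_⟩
  · rw [← hφι, hs, hs, horb]
  · simp only [map_mul, map_sub, map_one, hs, hpent i]
  · simp only [map_sum, map_mul, hs, hsum]

lemma exists_frieze_sum_eq_of_card (hcard : Fintype.card K = Fintype.card F ^ 5)
    (hc : IsCyclicOrbit (frobeniusAlgHom F K) c) (hinj : Function.Injective c)
    (he : frobeniusAlgHom F K e = e) :
    ∃ a, IsCyclicOrbit (frobeniusAlgHom F K) a ∧ IsFrieze a ∧ ∑ i, c i * a i = e := by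
  let d (i : ZMod 5) := e + (c (i + 2) + c (i + 3) + c (i + 4))
  have hd : IsCyclicOrbit (frobeniusAlgHom F K) d :=
    (IsCyclicOrbit.const he).add (((hc.shift 2).add (hc.shift 3)).add (hc.shift 4))
  have hd₀ : d 0 = e + (c 2 + c 3 + c 4) := rfl
  have hd₁ : d 1 = e + (c 3 + c 4 + c 0) := rfl
  have hd01 : d 0 ≠ d 1 := fun h ↦
    hinj.ne (by decide : (2 : ZMod 5) ≠ 0) (by linear_combination h - hd₀ + hd₁)
  obtain ⟨t, horb, ht, hsum⟩ := exists_pentagon_sum_eq_of_card hcard hd (hd.injective hd01)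
    (e := 2 * ∑ i, c i + 3 * e) (by
      rw [map_add, map_mul, map_mul, hc.map_sum, he, map_ofNat, map_ofNat])
  have ht0 := ht.ne_zero horb
  refine ⟨pentagonFrieze t, horb.pentagonFrieze, ht.isFrieze_pentagonFrieze ht0, ?_⟩
  refine mul_right_cancel₀ (Finset.prod_ne_zero_iff.2 fun i (_ : i ∈ Finset.univ) ↦ ht0 i) ?_
  have hd₂ : d 2 = e + (c 4 + c 0 + c 1) := rfl
  have hd₃ : d 3 = e + (c 0 + c 1 + c 2) := rfl
  have hd₄ : d 4 = e + (c 1 + c 2 + c 3) := rfl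
  simp only [sum_zmod_five, hd₀, hd₁, hd₂, hd₃, hd₄] at hsum
  rw [Finset.sum_mul]
  simp only [mul_assoc, ht.pentagonFrieze_mul_prod ht0]
  rw [ht.prod_eq, sum_zmod_five, sum_zmod_five]
  reduce_mod_char
  linear_combination -hsum

lemma exists_frieze_trinomialDet_eq_zero (hcard : Fintype.card K = Fintype.card F ^ 5)
    {α β γ : ZMod 5 → K} (hβ : IsCyclicOrbit (frobeniusAlgHom F K) β)
    (hγ : IsCyclicOrbit (frobeniusAlgHom F K) γ) (hα : ∀ i, α (i + 1) = γ i * β i * β (i + 1))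
    (hβ0 : β 0 ≠ 0) (hγ1 : γ 0 ≠ 1) (hγ01 : γ 0 ≠ γ 1) :
    ∃ a, IsCyclicOrbit (frobeniusAlgHom F K) a ∧ IsFrieze a ∧
      trinomialDet α (fun i ↦ a i * β i) = 0 := by
  have hd := (IsCyclicOrbit.const (map_one (frobeniusAlgHom F K))).sub hγ
  have hc := (hd.shift 1).mul (hd.shift 3)
  have hc02 : (1 - γ 1) * (1 - γ 3) ≠ (1 - γ 3) * (1 - γ 0) := fun h ↦ by
    have hd₃ := hd.ne_zero (i := 0) (sub_ne_zero.2 hγ1.symm) 3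
    exact hγ01 (mul_left_cancel₀ hd₃ (by linear_combination h))
  obtain ⟨a, haorb, ha, hsum⟩ := exists_frieze_sum_eq_of_card hcard hc
    (hc.injective (i := 0) (j := 2) hc02)
    (e := ∑ i, γ i - 3 - (∏ i, γ i) * ∏ i, β i - (∏ i, β i)⁻¹) (by
      simp only [map_sub, map_mul, map_inv₀, map_ofNat, hγ.map_sum, hγ.map_prod, hβ.map_prod])
  refine ⟨a, haorb, ha, ?_⟩
  have hprod : ∏ i, β i ≠ 0 := Finset.prod_ne_zero_iff.2 fun i _ ↦ hβ.ne_zero hβ0 i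
  rw [ha.trinomialDet_eq hα, hsum]
  field_simp
  ring

lemma orderOf_frobeniusAlgHom_of_card {n : ℕ} (hcard : Fintype.card K = Fintype.card F ^ n) :
    orderOf (frobeniusAlgHom F K) = n := by
  rw [orderOf_frobeniusAlgHom]
  exact Nat.pow_right_injective Fintype.one_lt_card (Module.card_eq_pow_finrank.symm.trans hcard)

end FiniteField

theorem stmt_16 (q : ℕ) (hq : ∃ p n : ℕ, Nat.Prime p ∧ 0 < n ∧ q = p ^ n)
    (K : Type*) [Field K] (F : Subfield K)
    (hFcard : Nat.card F = q) (hKcard : Nat.card K = q ^ 5)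
    (α β : K) (hαβ : α * β ≠ 0) (hne : α ^ q ≠ β ^ (q + 1))
    (hms : IsMaxScattered q F α β) :
    (α ^ q / β ^ (q + 1)) ^ q = α ^ q / β ^ (q + 1) := by
  obtain ⟨p, n, hp, -, hqpn⟩ := hq
  have hq0 : q ≠ 0 := hqpn ▸ pow_ne_zero n hp.ne_zero
  have : Finite F := Nat.finite_of_card_ne_zero (hFcard ▸ hq0)
  have : Finite K := Nat.finite_of_card_ne_zero (hKcard ▸ pow_ne_zero 5 hq0)
  have := Fintype.ofFinite K
  have := Fintype.ofFinite F
  rw [Nat.card_eq_fintype_card] at hFcard hKcard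
  obtain rfl := hFcard
  let σ := FiniteField.frobeniusAlgHom F K
  have hσ : orderOf σ = 5 := orderOf_frobeniusAlgHom_of_card hKcard
  have horb (x : K) : IsCyclicOrbit σ (conjugates σ 5 x) :=
    isCyclicOrbit_conjugates (isPeriodicPt_of_orderOf_eq hσ x)
  set γ := α ^ Fintype.card F / β ^ (Fintype.card F + 1)
  have hβ : β ≠ 0 := right_ne_zero_of_mul hαβ
  have hα : σ α = γ * β * σ β := by
    change α ^ Fintype.card F = γ * β * β ^ Fintype.card F
    rw [mul_assoc, ← pow_succ', div_mul_cancel₀ _ (pow_ne_zero _ hβ)]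
  by_contra hγ
  obtain ⟨a, haorb, ha, hdet⟩ := exists_frieze_trinomialDet_eq_zero hKcard (horb β) (horb γ)
    (conjugates_add_one_eq_mul hσ hα) hβ (div_ne_one_of_ne hne) (Ne.symm hγ)
  exact hms.trinomialDet_ne_zero (fun _ ↦ rfl) hσ (horb α) (horb β) haorb ha hdet
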